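/- arXiv:1911.12542 — 2 statements merged into one kernel-verified Lean document; each statement's English description precedes it below -/
import Mathlib

section
/- Let G be a θ-graph of order n ≥ 4, i.e., a 2-connected graph consisting of three pairwise internally disjoint paths with common endpoints. Then α(G) ≥ α(C_n). -/
/-!
Let `x` be a vector on the vertices of `G`, and let `u`, `v` be vertices where `x` is maximal and
minimal. If some cycle of `G` passes through both `u` and `v`, then for every vertex `t` off the
cycle the value `x t` lies between the values at two consecutive vertices of the cycle. Inserting
`t` between them does not increase the sum of the `(x i - x j) ^ 2` along the cycle, since
`(p - r) ^ 2 + (r - q) ^ 2 ≤ (p - q) ^ 2` for `r` between `p` and `q`. Inserting all the missing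
vertices yields a cyclic ordering of `V` whose energy is at most that of `x` on `G`, so `x`, read
along this ordering, has on `C_n` a Rayleigh quotient no larger than on `G`.
-/

open Matrix SimpleGraph

/-- The algebraic connectivity of `G`: the infimum of the Rayleigh quotients of the
Laplacian matrix over nonzero vectors orthogonal to the all-ones vector.  For a graph on
at least two vertices this is the second smallest eigenvalue of the Laplacian. -/
noncomputable def algCon {V : Type*} [Fintype V] [DecidableEq V] (G : SimpleGraph V) : ℝ :=
  letI := Classical.decRel G.Adj
  sInf { r : ℝ | ∃ x : V → ℝ, x ≠ 0 ∧ (∑ v, x v) = 0 ∧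
    r = (x ⬝ᵥ (G.lapMatrix ℝ *ᵥ x)) / (∑ v, (x v) ^ 2) }

/-- A graph is 2-connected if it has at least two vertices and every pair of distinct
vertices is joined by (at least) two internally disjoint paths. -/
def TwoConnected {V : Type*} (G : SimpleGraph V) : Prop :=
  (∃ u v : V, u ≠ v) ∧ ∀ u v : V, u ≠ v → ∃ p q : G.Walk u v, p.IsPath ∧ q.IsPath ∧
    ∀ w, w ∈ p.support → w ∈ q.support → w = u ∨ w = v

/-- `G` is a θ-graph: it consists of three pairwise internally disjoint paths with common
endpoints `a ≠ b`, which together exhaust all vertices and all edges of `G`. -/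
def IsThetaGraph {V : Type*} (G : SimpleGraph V) : Prop :=
  ∃ (a b : V) (p₁ p₂ p₃ : G.Walk a b), a ≠ b ∧ p₁.IsPath ∧ p₂.IsPath ∧ p₃.IsPath ∧
    (∀ w, w ∈ p₁.support → w ∈ p₂.support → w = a ∨ w = b) ∧
    (∀ w, w ∈ p₁.support → w ∈ p₃.support → w = a ∨ w = b) ∧
    (∀ w, w ∈ p₂.support → w ∈ p₃.support → w = a ∨ w = b) ∧
    (∀ w : V, w ∈ p₁.support ∨ w ∈ p₂.support ∨ w ∈ p₃.support) ∧
    (∀ e, e ∈ G.edgeSet ↔ e ∈ p₁.edges ∨ e ∈ p₂.edges ∨ e ∈ p₃.edges)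

/-- The cycle `C_n` on vertices `v₀, …, v_{n-1}` together with the chords
`v_{(f j).1} v_{(f j).2}` for `j = 1, …, k`. -/
def cyclePlusChords (n k : ℕ) (f : Fin k → ℕ × ℕ) : SimpleGraph (Fin n) :=
  SimpleGraph.cycleGraph n ⊔ SimpleGraph.fromEdgeSet
    {e | ∃ (j : Fin k) (a b : Fin n), (a : ℕ) = (f j).1 ∧ (b : ℕ) = (f j).2 ∧ e = s(a, b)}

/-- `H₁(i₁,…,i_k) = C_n + v_{i₁}v_{n−i₁} + ⋯ + v_{i_k}v_{n−i_k}` (`n` odd); this is also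
the graph `H₂(i₁,…,i_k)` when `n` is even. -/
def H12 (n k : ℕ) (i : Fin k → ℕ) : SimpleGraph (Fin n) :=
  cyclePlusChords n k (fun j => (i j, n - i j))

/-- `H₃(i₁,…,i_k) = C_n + v_{i₁}v_{n−i₁−1} + ⋯ + v_{i_k}v_{n−i_k−1}` (`n` even). -/
def H3 (n k : ℕ) (i : Fin k → ℕ) : SimpleGraph (Fin n) :=
  cyclePlusChords n k (fun j => (i j, n - i j - 1))

section PathEnergy

variable {V : Type*} (x : V → ℝ)

/-- The contribution `(x u - x v) ^ 2` of the edge `uv` to the Laplacian quadratic form at `x`. -/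
def edgeEnergy : Sym2 V → ℝ :=
  Sym2.lift ⟨fun u v => (x u - x v) ^ 2, fun _ _ => sub_sq_comm _ _⟩

/-- The energy of `x` along a sequence of vertices, i.e. the sum of `edgeEnergy` over consecutive
pairs. Consecutive vertices need not be adjacent in any graph. -/
def pathEnergy (l : List V) : ℝ :=
  (List.zipWith (fun u v => edgeEnergy x s(u, v)) l l.tail).sum

@[simp]
lemma edgeEnergy_mk (u v : V) : edgeEnergy x s(u, v) = (x u - x v) ^ 2 := rfl

lemma edgeEnergy_nonneg (e : Sym2 V) : 0 ≤ edgeEnergy x e := by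
  induction e with
  | _ u v => exact sq_nonneg _

@[simp]
lemma pathEnergy_singleton (u : V) : pathEnergy x [u] = 0 := rfl

@[simp]
lemma pathEnergy_cons_cons (u v : V) (l : List V) :
    pathEnergy x (u :: v :: l) = (x u - x v) ^ 2 + pathEnergy x (v :: l) := by
  simp [pathEnergy]

lemma pathEnergy_closed_eq_sum (a : V) (l : List V) :
    pathEnergy x (a :: l ++ [a]) =
      ∑ i : Fin (l.length + 1), (x ((a :: l).get i) - x ((a :: l).get (i + 1))) ^ 2 := by
  have hrotate : pathEnergy x (a :: l ++ [a]) =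
      (List.zipWith (fun u v => (x u - x v) ^ 2) (a :: l) ((a :: l).rotate 1)).sum := by
    have htail : (a :: l ++ [a]).tail = (a :: l).rotate 1 ++ [] := by simp
    rw [pathEnergy, htail, List.zipWith_append (by simp)]
    simp
  rw [hrotate, ← Fin.sum_univ_getElem]
  refine Fintype.sum_equiv (finCongr (by simp)) _ _ fun i => ?_
  simp only [List.getElem_zipWith, List.getElem_rotate, List.get_eq_getElem, List.length_cons,
    finCongr_apply, Fin.val_add, Fin.val_cast, Fin.val_one', Nat.add_mod_mod]

lemma sub_sq_add_sub_sq_le_of_mem_uIcc {p q r : ℝ} (hr : r ∈ Set.uIcc p q) :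
    (p - r) ^ 2 + (r - q) ^ 2 ≤ (p - q) ^ 2 := by
  rcases Set.mem_uIcc.1 hr with ⟨h₁, h₂⟩ | ⟨h₁, h₂⟩ <;>
    nlinarith [mul_nonneg (sub_nonneg.2 h₁) (sub_nonneg.2 h₂)]

variable {x}

lemma exists_perm_cons_pathEnergy_le {t b : V} {l : List V} {a : V}
    (h : ∃ m ∈ l ++ [b], x t ∈ Set.uIcc (x a) (x m)) :
    ∃ l', l'.Perm (t :: l) ∧ pathEnergy x (a :: l' ++ [b]) ≤ pathEnergy x (a :: l ++ [b]) := by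
  induction l generalizing a with
  | nil =>
    obtain ⟨m, hm, ht⟩ := h
    obtain rfl : m = b := by simpa using hm
    exact ⟨[t], .refl _, by simpa using sub_sq_add_sub_sq_le_of_mem_uIcc ht⟩
  | cons c l ih =>
    obtain ⟨m, hm, ht⟩ := h
    by_cases hc : x t ∈ Set.uIcc (x a) (x c)
    · refine ⟨t :: c :: l, .refl _, ?_⟩
      have := sub_sq_add_sub_sq_le_of_mem_uIcc hc
      simp only [List.cons_append, pathEnergy_cons_cons]
      linarith
    · have htc : x t ∈ Set.uIcc (x c) (x m) :=
        (Set.uIcc_subset_uIcc_union_uIcc ht).resolve_left hc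
      have hml : m ∈ l ++ [b] := by
        refine (List.mem_cons.1 hm).resolve_left ?_
        rintro rfl
        exact hc ht
      obtain ⟨l', hperm, hle⟩ := ih ⟨m, hml, htc⟩
      refine ⟨c :: l', (hperm.cons c).trans (.swap _ _ _), ?_⟩
      simpa using hle

lemma exists_perm_append_pathEnergy_le {a u v : V} {l : List V} (hu : u ∈ a :: l)
    (hv : v ∈ a :: l) (s : List V) (hs : ∀ t ∈ s, x t ∈ Set.Icc (x v) (x u)) :
    ∃ l', l'.Perm (s ++ l) ∧ pathEnergy x (a :: l' ++ [a]) ≤ pathEnergy x (a :: l ++ [a]) := by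
  induction s with
  | nil => exact ⟨l, .refl _, le_rfl⟩
  | cons t s ih =>
    obtain ⟨l₁, hperm₁, hle₁⟩ := ih fun r hr => hs r (List.mem_cons_of_mem _ hr)
    obtain ⟨hvt, htu⟩ := hs t List.mem_cons_self
    have hmem {w : V} (hw : w ∈ a :: l) : w ∈ l₁ ++ [a] := by
      simp only [List.mem_append, hperm₁.mem_iff, List.mem_cons] at hw ⊢
      tauto
    have hbetween : ∃ m ∈ l₁ ++ [a], x t ∈ Set.uIcc (x a) (x m) := by
      rcases le_total (x t) (x a) with hta | hat
      · exact ⟨v, hmem hv, Set.mem_uIcc.2 (.inr ⟨hvt, hta⟩)⟩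
      · exact ⟨u, hmem hu, Set.mem_uIcc.2 (.inl ⟨hat, htu⟩)⟩
    obtain ⟨l₂, hperm₂, hle₂⟩ := exists_perm_cons_pathEnergy_le hbetween
    exact ⟨l₂, hperm₂.trans (hperm₁.cons t), hle₂.trans hle₁⟩

lemma exists_equiv_sum_le_pathEnergy [Finite V] {a u v : V} {l : List V}
    (hnodup : (a :: l).Nodup) (hu : u ∈ a :: l) (hv : v ∈ a :: l) (hmax : ∀ w, x w ≤ x u)
    (hmin : ∀ w, x v ≤ x w) :
    ∃ (m : ℕ) (e : Fin (m + 1) ≃ V),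
      ∑ i, (x (e i) - x (e (i + 1))) ^ 2 ≤ pathEnergy x (a :: l ++ [a]) := by
  classical
  have := Fintype.ofFinite V
  let s := ((a :: l).toFinset)ᶜ.toList
  have hs_mem (w : V) : w ∈ s ↔ w ∉ a :: l := by simp [s]
  obtain ⟨l', hperm, hle⟩ :=
    exists_perm_append_pathEnergy_le hu hv s fun t _ => ⟨hmin t, hmax t⟩
  have hperm' : (a :: l').Perm (s ++ a :: l) := (hperm.cons a).trans List.perm_middle.symm
  have hnodup' : (a :: l').Nodup :=
    hperm'.nodup_iff.2 <| List.nodup_append'.2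
      ⟨Finset.nodup_toList _, hnodup, fun w hw => (hs_mem w).1 hw⟩
  have hmem (w : V) : w ∈ a :: l' := by
    rw [hperm'.mem_iff, List.mem_append, hs_mem]
    exact (em _).symm
  refine ⟨l'.length, hnodup'.getEquivOfForallMemList _ hmem, ?_⟩
  exact (pathEnergy_closed_eq_sum x a l').symm.trans_le hle

end PathEnergy

section LaplacianForm

variable {V : Type*} [Fintype V] [DecidableEq V] (G : SimpleGraph V) [DecidableRel G.Adj]

lemma dotProduct_lapMatrix_mulVec_eq_sum_edgeEnergy (x : V → ℝ) :
    x ⬝ᵥ (G.lapMatrix ℝ *ᵥ x) = ∑ e ∈ G.edgeFinset, edgeEnergy x e := by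
  have hdart : ∑ u, ∑ v, (if G.Adj u v then (x u - x v) ^ 2 else 0) =
      ∑ d : G.Dart, edgeEnergy x d.edge := by
    rw [← Fintype.sum_prod_type', ← Finset.sum_filter]
    exact (Finset.sum_bij (fun d _ => d.toProd) (by simp)
      (fun _ _ _ _ h => Dart.toProd_injective h) (fun p hp => ⟨⟨p, by simpa using hp⟩, by simp⟩)
      fun _ _ => rfl).symm
  have hedge : ∑ d : G.Dart, edgeEnergy x d.edge = 2 * ∑ e ∈ G.edgeFinset, edgeEnergy x e := by
    rw [← Finset.sum_fiberwise_of_maps_to (t := G.edgeFinset) (g := Dart.edge) (by simp),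
      Finset.mul_sum]
    refine Finset.sum_congr rfl fun e he => ?_
    rw [Finset.sum_congr rfl fun d hd => by rw [(Finset.mem_filter.1 hd).2], Finset.sum_const,
      G.dart_edge_fiber_card e (mem_edgeFinset.1 he), nsmul_eq_mul, Nat.cast_two]
  rw [← toLinearMap₂'_apply', lapMatrix_toLinearMap₂', hdart, hedge,
    mul_div_cancel_left₀ _ two_ne_zero]

variable {G}

lemma pathEnergy_support_le_of_isTrail (x : V → ℝ) {a b : V} {p : G.Walk a b} (hp : p.IsTrail) :
    pathEnergy x p.support ≤ x ⬝ᵥ (G.lapMatrix ℝ *ᵥ x) := by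
  calc pathEnergy x p.support = (p.edges.map (edgeEnergy x)).sum := by
        rw [Walk.edges_eq_zipWith_support, List.map_zipWith, pathEnergy]
    _ = ∑ e ∈ p.edges.toFinset, edgeEnergy x e := (List.sum_toFinset _ hp.edges_nodup).symm
    _ ≤ ∑ e ∈ G.edgeFinset, edgeEnergy x e :=
        Finset.sum_le_sum_of_subset_of_nonneg
          (fun e he => mem_edgeFinset.2 (p.edges_subset_edgeSet (List.mem_toFinset.1 he)))
          fun e _ _ => edgeEnergy_nonneg x e
    _ = x ⬝ᵥ (G.lapMatrix ℝ *ᵥ x) := (dotProduct_lapMatrix_mulVec_eq_sum_edgeEnergy G x).symm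

lemma dotProduct_lapMatrix_cycleGraph_mulVec_le {m : ℕ} [DecidableRel (cycleGraph (m + 1)).Adj]
    (y : Fin (m + 1) → ℝ) :
    y ⬝ᵥ ((cycleGraph (m + 1)).lapMatrix ℝ *ᵥ y) ≤ ∑ i, (y i - y (i + 1)) ^ 2 := by
  have hsub : (cycleGraph (m + 1)).edgeFinset ⊆
      Finset.univ.image fun i : Fin (m + 1) => s(i, i + 1) := by
    intro e he
    induction e with
    | _ i j =>
      have hadj : (cycleGraph (m + 1)).Adj i j := by simpa using he
      simp only [cycleGraph_eq_circulantGraph, circulantGraph_adj, Set.mem_singleton_iff,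
        sub_eq_iff_eq_add'] at hadj
      rcases hadj.2 with rfl | rfl
      · exact Finset.mem_image.2 ⟨j, Finset.mem_univ _, Sym2.eq_swap⟩
      · exact Finset.mem_image_of_mem _ (Finset.mem_univ _)
  rw [dotProduct_lapMatrix_mulVec_eq_sum_edgeEnergy]
  exact (Finset.sum_le_sum_of_subset_of_nonneg hsub fun e _ _ => edgeEnergy_nonneg y e).trans
    (Finset.sum_image_le_of_nonneg fun e _ => edgeEnergy_nonneg y e)

lemma exists_equiv_cycleGraph_dotProduct_le {x : V → ℝ} {a u v : V} {c : G.Walk a a}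
    (hc : c.IsCycle) (hu : u ∈ c.support) (hv : v ∈ c.support) (hmax : ∀ w, x w ≤ x u)
    (hmin : ∀ w, x v ≤ x w) [DecidableRel (cycleGraph (Fintype.card V)).Adj] :
    ∃ e : Fin (Fintype.card V) ≃ V,
      (x ∘ e) ⬝ᵥ ((cycleGraph (Fintype.card V)).lapMatrix ℝ *ᵥ (x ∘ e)) ≤
        x ⬝ᵥ (G.lapMatrix ℝ *ᵥ x) := by
  obtain ⟨l, hl⟩ : ∃ l, c.support.dropLast = a :: l := by
    cases c with
    | nil => exact absurd rfl hc.ne_nil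
    | cons h p => exact ⟨_, List.dropLast_cons_of_ne_nil p.support_ne_nil⟩
  have hsupp : c.support = a :: l ++ [a] := by rw [← hl, c.dropLast_support_concat]
  have hmem {w : V} (hw : w ∈ c.support) : w ∈ a :: l := by
    simp only [hsupp, List.mem_append, List.mem_cons] at hw ⊢
    tauto
  obtain ⟨m, e, he⟩ := exists_equiv_sum_le_pathEnergy (hl ▸ hc.nodup_dropLast_support) (hmem hu)
    (hmem hv) hmax hmin
  have hcard : Fintype.card V = m + 1 := by simpa using (Fintype.card_congr e).symm
  generalize Fintype.card V = n at *
  subst hcard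
  refine ⟨e, (dotProduct_lapMatrix_cycleGraph_mulVec_le _).trans (he.trans ?_)⟩
  rw [← hsupp]
  exact pathEnergy_support_le_of_isTrail x hc.isTrail

end LaplacianForm

section AlgCon

variable {V W : Type*} [Fintype V] [DecidableEq V] [Fintype W] [DecidableEq W]
  (G : SimpleGraph V) (H : SimpleGraph W) [DecidableRel G.Adj] [DecidableRel H.Adj]

lemma algCon_eq_sInf : algCon G = sInf {r : ℝ | ∃ x : V → ℝ, x ≠ 0 ∧ ∑ v, x v = 0 ∧
    r = (x ⬝ᵥ (G.lapMatrix ℝ *ᵥ x)) / ∑ v, x v ^ 2} := by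
  unfold algCon
  congr!

lemma algCon_le_div {x : V → ℝ} (hx : x ≠ 0) (hsum : ∑ v, x v = 0) :
    algCon G ≤ (x ⬝ᵥ (G.lapMatrix ℝ *ᵥ x)) / ∑ v, x v ^ 2 := by
  rw [algCon_eq_sInf]
  refine csInf_le ⟨0, ?_⟩ ⟨x, hx, hsum, rfl⟩
  rintro _ ⟨y, -, -, rfl⟩
  rw [dotProduct_lapMatrix_mulVec_eq_sum_edgeEnergy]
  exact div_nonneg (Finset.sum_nonneg fun e _ => edgeEnergy_nonneg y e)
    (Finset.sum_nonneg fun v _ => sq_nonneg (y v))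

lemma le_algCon [Nontrivial V] {r : ℝ} (h : ∀ x : V → ℝ, x ≠ 0 → ∑ v, x v = 0 →
    r ≤ (x ⬝ᵥ (G.lapMatrix ℝ *ᵥ x)) / ∑ v, x v ^ 2) : r ≤ algCon G := by
  rw [algCon_eq_sInf]
  refine le_csInf ?_ ?_
  · obtain ⟨u, v, huv⟩ := exists_pair_ne V
    refine ⟨_, Pi.single u 1 - Pi.single v 1, fun h₀ => ?_, by simp, rfl⟩
    simpa [huv] using congrFun h₀ u
  · rintro _ ⟨x, hx, hsum, rfl⟩
    exact h x hx hsum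

variable {G H}

lemma algCon_le_algCon_of_forall_exists_equiv [Nontrivial V]
    (h : ∀ x : V → ℝ, ∃ e : W ≃ V,
      (x ∘ e) ⬝ᵥ (H.lapMatrix ℝ *ᵥ (x ∘ e)) ≤ x ⬝ᵥ (G.lapMatrix ℝ *ᵥ x)) :
    algCon H ≤ algCon G := by
  refine le_algCon G fun x hx hsum => ?_
  obtain ⟨e, he⟩ := h x
  have hne : x ∘ e ≠ 0 := fun h₀ => hx (e.surjective.injective_comp_right h₀)
  calc algCon H ≤ ((x ∘ e) ⬝ᵥ (H.lapMatrix ℝ *ᵥ (x ∘ e))) / ∑ w, (x ∘ e) w ^ 2 :=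
        algCon_le_div H hne ((e.sum_comp x).trans hsum)
    _ = ((x ∘ e) ⬝ᵥ (H.lapMatrix ℝ *ᵥ (x ∘ e))) / ∑ v, x v ^ 2 :=
        congrArg _ (e.sum_comp fun v => x v ^ 2)
    _ ≤ (x ⬝ᵥ (G.lapMatrix ℝ *ᵥ x)) / ∑ v, x v ^ 2 :=
        div_le_div_of_nonneg_right he (Finset.sum_nonneg fun v _ => sq_nonneg (x v))

end AlgCon

section CommonCycle

variable {V : Type*} {G : SimpleGraph V} {a b : V}

lemma one_lt_length_of_mem_support {p : G.Walk a b} {w : V} (hw : w ∈ p.support) (hwa : w ≠ a)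
    (hwb : w ≠ b) : 1 < p.length := by
  match p with
  | .nil => simp_all
  | .cons _ .nil => simp_all
  | .cons _ (.cons _ _) => simp

lemma isCycle_append_reverse {p q : G.Walk a b} (hp : p.IsPath) (hq : q.IsPath)
    (hdisj : ∀ w ∈ p.support, w ∈ q.support → w = a ∨ w = b) (hlen : 1 < p.length) :
    (p.append q.reverse).IsCycle := by
  refine hp.isCycle_append hq.reverse (fun w hwp hwq => ?_) (.inl hlen)
  have hwa : w ≠ a := by
    rintro rfl
    exact (List.nodup_cons.1 (p.cons_tail_support ▸ hp.support_nodup)).1 hwp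
  have hwb : w ≠ b := by
    rintro rfl
    exact (List.nodup_cons.1 (q.reverse.cons_tail_support ▸ hq.reverse.support_nodup)).1 hwq
  have hwq' : w ∈ q.support := by simpa using List.mem_of_mem_tail hwq
  exact (hdisj w (List.mem_of_mem_tail hwp) hwq').elim hwa hwb

lemma exists_isCycle_of_internally_disjoint {ι : Type*} [Nontrivial ι] {p : ι → G.Walk a b}
    (hp : ∀ i, (p i).IsPath)
    (hdisj : ∀ i j, i ≠ j → ∀ w ∈ (p i).support, w ∈ (p j).support → w = a ∨ w = b)
    (hcover : ∀ w, ∃ i, w ∈ (p i).support) (hinner : ∃ w, w ≠ a ∧ w ≠ b) (u v : V) :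
    ∃ c : G.Walk a a, c.IsCycle ∧ u ∈ c.support ∧ v ∈ c.support := by
  have hlong (w : V) : ∃ i, 1 < (p i).length ∧ w ∈ (p i).support := by
    by_cases hw : w = a ∨ w = b
    · obtain ⟨z, hza, hzb⟩ := hinner
      obtain ⟨i, hi⟩ := hcover z
      exact ⟨i, one_lt_length_of_mem_support hi hza hzb, by rcases hw with rfl | rfl <;> simp⟩
    · obtain ⟨hwa, hwb⟩ := not_or.1 hw
      obtain ⟨i, hi⟩ := hcover w
      exact ⟨i, one_lt_length_of_mem_support hi hwa hwb, hi⟩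
  obtain ⟨i, hi, hu⟩ := hlong u
  obtain ⟨j, hij, hv⟩ : ∃ j, i ≠ j ∧ (v ∈ (p i).support ∨ v ∈ (p j).support) := by
    obtain ⟨k, hk⟩ := hcover v
    rcases eq_or_ne i k with rfl | hik
    · exact (exists_ne i).imp fun j hj => ⟨hj.symm, .inl hk⟩
    · exact ⟨k, hik, .inr hk⟩
  refine ⟨(p i).append (p j).reverse,
    isCycle_append_reverse (hp i) (hp j) (hdisj i j hij) hi, ?_, ?_⟩ <;>
    simp [Walk.mem_support_append_iff, hu, hv]

lemma IsThetaGraph.exists_isCycle [Fintype V] (hG : IsThetaGraph G) (hcard : 3 ≤ Fintype.card V)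
    (u v : V) : ∃ (a : V) (c : G.Walk a a), c.IsCycle ∧ u ∈ c.support ∧ v ∈ c.support := by
  classical
  obtain ⟨a, b, p₁, p₂, p₃, -, hp₁, hp₂, hp₃, h₁₂, h₁₃, h₂₃, hcover, -⟩ := hG
  obtain ⟨w, -, hw⟩ : ∃ w ∈ Finset.univ, w ∉ ({a, b} : Finset V) :=
    Finset.exists_mem_notMem_of_card_lt_card (Finset.card_le_two.trans_lt hcard)
  refine ⟨a, exists_isCycle_of_internally_disjoint (p := ![p₁, p₂, p₃]) ?_ ?_ ?_
    ⟨w, by simpa using hw⟩ u v⟩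
  · simp [Fin.forall_fin_succ, hp₁, hp₂, hp₃]
  · intro i j hij w hi hj
    fin_cases i <;> fin_cases j <;>
      first
      | exact absurd rfl hij
      | exact h₁₂ w hi hj
      | exact h₁₂ w hj hi
      | exact h₁₃ w hi hj
      | exact h₁₃ w hj hi
      | exact h₂₃ w hi hj
      | exact h₂₃ w hj hi
  · simpa [Fin.exists_fin_succ] using hcover

end CommonCycle

/-- By Whitney's theorem, the assumption on common cycles expresses 2-connectedness when `G` has at
least three vertices. -/
theorem algCon_theta_ge_cycle_general {V : Type*} [Fintype V] [DecidableEq V] [Nontrivial V]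
    (G : SimpleGraph V)
    (hG : ∀ u v, u ≠ v → ∃ (a : V) (c : G.Walk a a), c.IsCycle ∧ u ∈ c.support ∧ v ∈ c.support) :
    algCon G ≥ algCon (cycleGraph (Fintype.card V)) := by
  classical
  refine algCon_le_algCon_of_forall_exists_equiv fun x => ?_
  obtain ⟨u, hu⟩ := Finite.exists_max x
  have : Nonempty {w // w ≠ u} := nonempty_subtype.2 (exists_ne u)
  obtain ⟨⟨v, hvu⟩, hv'⟩ := Finite.exists_min fun w : {w // w ≠ u} => x w
  have hv (w : V) : x v ≤ x w := by
    rcases eq_or_ne w u with rfl | hwu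
    · exact hu v
    · exact hv' ⟨w, hwu⟩
  obtain ⟨a, c, hc, huc, hvc⟩ := hG u v hvu.symm
  exact exists_equiv_cycleGraph_dotProduct_le hc huc hvc hu hv

theorem algCon_theta_ge_cycle
    {V : Type*} [Fintype V] [DecidableEq V] {n : ℕ}
    (G : SimpleGraph V) (hcard : Fintype.card V = n) (hn : 4 ≤ n)
    (hG : IsThetaGraph G) :
    algCon G ≥ algCon (SimpleGraph.cycleGraph n) := by
  subst hcard
  have : Nontrivial V := Fintype.one_lt_card_iff_nontrivial.1 (by omega)
  exact algCon_theta_ge_cycle_general G fun u v _ => hG.exists_isCycle (by omega) u v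
end

section
/- Let G be a 2-connected graph of odd order n ≥ 5 with α(G) = α(C_n). Then G ≅ C_n or G ≅ H₁(i₁,…,i_k) for some 1 ≤ i₁ ≤ ⋯ ≤ i_k ≤ (n−3)/2, where H₁(i₁,…,i_k) = C_n + v_{i₁}v_{n−i₁} + ⋯ + v_{i_k}v_{n−i_k}. -/
open Matrix SimpleGraph

/-!
Number the vertices so that a Fiedler vector `f` of `G` is increasing. Its energy is a sum over
pairs of cuts `(g, g + 1)`, `(h, h + 1)` of the number of edges crossing both, weighted by the
product of the gaps of `f`. By 2-connectedness at least two edges cross each cut, and at least one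
crosses two consecutive cuts (delete the vertex between them); the `n`-cycle folded flat attains
these bounds. So `α(G) ≥ α(C_n)`, and equality forces `f` to be a Fiedler vector of the folded
cycle, whose eigenvector equation then makes all even or all odd gaps of `f` positive. Up to
reversal, exactly two edges of `G` cross every even cut and none crosses two of them: `G` consists
of a bottom vertex and levels of two vertices, with a perfect matching between consecutive levels,
and the only freedom left is whether the two vertices of a level below the top one are adjacent.
-/

open scoped Finset

section Laplacian

variable {V W : Type*} [Fintype V] [DecidableEq V] [Fintype W] [DecidableEq W]
  {G : SimpleGraph V} {H : SimpleGraph W} {x : V → ℝ}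

/-- The quadratic form `x ↦ xᵀ L x` of the Laplacian matrix `L` of `G`, the numerator of the
Rayleigh quotients in `algCon`. -/
noncomputable def lapForm (G : SimpleGraph V) (x : V → ℝ) : ℝ :=
  letI := Classical.decRel G.Adj
  x ⬝ᵥ (G.lapMatrix ℝ *ᵥ x)

theorem lapForm_eq_dotProduct [DecidableRel G.Adj] (x : V → ℝ) :
    lapForm G x = x ⬝ᵥ (G.lapMatrix ℝ *ᵥ x) := by
  unfold lapForm
  congr!

theorem lapForm_eq_sum [DecidableRel G.Adj] (x : V → ℝ) :
    lapForm G x = (∑ i, ∑ j, if G.Adj i j then (x i - x j) ^ 2 else 0) / 2 := by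
  rw [lapForm_eq_dotProduct, ← G.lapMatrix_toLinearMap₂' ℝ x, Matrix.toLinearMap₂'_apply']

theorem lapForm_nonneg (G : SimpleGraph V) (x : V → ℝ) : 0 ≤ lapForm G x := by
  classical
  rw [lapForm_eq_sum]
  positivity

theorem lapForm_smul (c : ℝ) (x : V → ℝ) : lapForm G (c • x) = c ^ 2 * lapForm G x := by
  classical
  simp only [lapForm_eq_dotProduct, mulVec_smul, smul_dotProduct, dotProduct_smul, smul_eq_mul]
  ring

theorem lapForm_add_smul [DecidableRel G.Adj] (x r : V → ℝ) (t : ℝ) :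
    lapForm G (x + t • r) =
      lapForm G x + 2 * t * (r ⬝ᵥ (G.lapMatrix ℝ *ᵥ x)) + t ^ 2 * lapForm G r := by
  have hsymm : x ⬝ᵥ (G.lapMatrix ℝ *ᵥ r) = r ⬝ᵥ (G.lapMatrix ℝ *ᵥ x) := by
    rw [dotProduct_mulVec, ← mulVec_transpose, (G.isSymm_lapMatrix (R := ℝ)).eq, dotProduct_comm]
  simp only [lapForm_eq_dotProduct, mulVec_add, mulVec_smul, add_dotProduct, dotProduct_add,
    smul_dotProduct, dotProduct_smul, smul_eq_mul, hsymm]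
  ring

theorem continuous_lapForm (G : SimpleGraph V) : Continuous (lapForm G) := by
  unfold lapForm
  fun_prop

theorem lapForm_comp_iso (f : G ≃g H) (x : W → ℝ) : lapForm G (x ∘ f) = lapForm H x := by
  classical
  simp only [lapForm_eq_sum, Function.comp_apply]
  congr 1
  refine Fintype.sum_equiv f.toEquiv _ _ fun i => Fintype.sum_equiv f.toEquiv _ _ fun j => ?_
  simp [f.map_adj_iff]

theorem sum_lapMatrix_mulVec [DecidableRel G.Adj] (x : V → ℝ) :
    ∑ v, (G.lapMatrix ℝ *ᵥ x) v = 0 := by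
  have hone : (fun _ => 1) ᵥ* G.lapMatrix ℝ = 0 := by
    rw [← mulVec_transpose, (G.isSymm_lapMatrix (R := ℝ)).eq, lapMatrix_mulVec_const_eq_zero]
  simpa [hone, dotProduct] using dotProduct_mulVec (fun _ : V => (1 : ℝ)) (G.lapMatrix ℝ) x

theorem algCon_mul_le (G : SimpleGraph V) (hx : ∑ v, x v = 0) :
    algCon G * ∑ v, x v ^ 2 ≤ lapForm G x := by
  obtain rfl | hne := eq_or_ne x 0
  · simpa using lapForm_nonneg G 0
  · obtain ⟨v, hv⟩ := Function.ne_iff.mp hne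
    have hpos : 0 < ∑ v, x v ^ 2 :=
      Finset.sum_pos' (fun _ _ => sq_nonneg _) ⟨v, Finset.mem_univ v, sq_pos_of_ne_zero hv⟩
    rw [← le_div_iff₀ hpos]
    refine csInf_le ⟨0, ?_⟩ ⟨x, hne, hx, rfl⟩
    rintro _ ⟨y, -, -, rfl⟩
    exact div_nonneg (lapForm_nonneg G y) (Finset.sum_nonneg fun _ _ => sq_nonneg _)

/-- A Fiedler vector of `G`: a nonzero vector orthogonal to the all-ones vector that attains the
minimal Rayleigh quotient `algCon G`. -/
structure IsFiedler (G : SimpleGraph V) (x : V → ℝ) : Prop where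
  ne_zero : x ≠ 0
  sum_eq_zero : ∑ v, x v = 0
  lapForm_eq : lapForm G x = algCon G * ∑ v, x v ^ 2

theorem exists_isFiedler [Nontrivial V] (G : SimpleGraph V) : ∃ x, IsFiedler G x := by
  let S : Set (V → ℝ) := {x | ∑ v, x v = 0} ∩ Metric.sphere 0 1
  let rayleigh (x : V → ℝ) : ℝ := lapForm G x / ∑ v, x v ^ 2
  have hsq {x : V → ℝ} (hx : x ≠ 0) : ∑ v, x v ^ 2 ≠ 0 := fun h => hx <| funext fun v =>
    pow_eq_zero_iff two_ne_zero |>.mp <|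
      (Finset.sum_eq_zero_iff_of_nonneg fun _ _ => sq_nonneg _).mp h v (Finset.mem_univ v)
  have hscale {x : V → ℝ} (c : ℝ) (hc : c ≠ 0) : rayleigh (c • x) = rayleigh x := by
    simp only [rayleigh, lapForm_smul, Pi.smul_apply, smul_eq_mul, mul_pow, ← Finset.mul_sum]
    exact mul_div_mul_left _ _ (pow_ne_zero 2 hc)
  have hnormalize {x : V → ℝ} (hx : x ≠ 0) (hsum : ∑ v, x v = 0) : ‖x‖⁻¹ • x ∈ S :=
    ⟨by simp [← Finset.mul_sum, hsum], by simpa using norm_smul_inv_norm (𝕜 := ℝ) hx⟩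
  have hcompact : IsCompact S :=
    (isCompact_sphere _ _).inter_left <| isClosed_eq (by fun_prop) continuous_const
  have hcont : ContinuousOn rayleigh S := by
    refine (continuous_lapForm G).continuousOn.div (by fun_prop) fun x hx => hsq ?_
    exact Metric.ne_of_mem_sphere hx.2 one_ne_zero
  obtain ⟨u, v, huv⟩ := exists_pair_ne V
  have hnonempty : S.Nonempty :=
    ⟨_, hnormalize (x := Pi.single u 1 - Pi.single v 1)
      (Function.ne_iff.mpr ⟨u, by simp [huv]⟩) (by simp)⟩
  obtain ⟨x, hxS, hmin⟩ := hcompact.exists_isMinOn hnonempty hcont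
  have hx : x ≠ 0 := Metric.ne_of_mem_sphere hxS.2 one_ne_zero
  have hleast : IsLeast {r : ℝ | ∃ y : V → ℝ, y ≠ 0 ∧ ∑ v, y v = 0 ∧ r = rayleigh y}
      (rayleigh x) := by
    refine ⟨⟨x, hx, hxS.1, rfl⟩, ?_⟩
    rintro _ ⟨y, hy, hsum, rfl⟩
    rw [← hscale (x := y) ‖y‖⁻¹ (inv_ne_zero (norm_ne_zero_iff.mpr hy))]
    exact hmin (hnormalize hy hsum)
  exact ⟨x, hx, hxS.1, (div_eq_iff (hsq hx)).mp hleast.csInf_eq.symm⟩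

namespace IsFiedler

theorem neg (h : IsFiedler G x) : IsFiedler G (-x) where
  ne_zero := neg_ne_zero.mpr h.ne_zero
  sum_eq_zero := by simpa using h.sum_eq_zero
  lapForm_eq := by simpa [h.lapForm_eq] using lapForm_smul (G := G) (-1) x

/-- The first variation of the Rayleigh quotient at `x` in the direction of the residual vector
`L x - algCon G • x` is twice the square norm of that residual. -/
theorem lapMatrix_mulVec [DecidableRel G.Adj] (h : IsFiedler G x) :
    G.lapMatrix ℝ *ᵥ x = algCon G • x := by
  set r := G.lapMatrix ℝ *ᵥ x - algCon G • x with hr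
  have hrsum : ∑ v, r v = 0 := by
    simp [hr, sum_lapMatrix_mulVec, ← Finset.mul_sum, h.sum_eq_zero]
  have hvariation (t : ℝ) :
      0 ≤ (lapForm G r - algCon G * ∑ v, r v ^ 2) * (t * t) + (2 * (r ⬝ᵥ r)) * t + 0 := by
    have hle := algCon_mul_le G (x := x + t • r)
      (by simp [Finset.sum_add_distrib, ← Finset.mul_sum, h.sum_eq_zero, hrsum])
    have hexpand : ∑ v, (x + t • r) v ^ 2 =
        ∑ v, x v ^ 2 + 2 * t * (r ⬝ᵥ x) + t ^ 2 * ∑ v, r v ^ 2 := by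
      simp only [dotProduct, Finset.mul_sum, ← Finset.sum_add_distrib, Pi.add_apply,
        Pi.smul_apply, smul_eq_mul]
      exact Finset.sum_congr rfl fun v _ => by ring
    have hrr : r ⬝ᵥ r = r ⬝ᵥ (G.lapMatrix ℝ *ᵥ x) - algCon G * (r ⬝ᵥ x) := by
      conv_lhs => rw [hr, dotProduct_sub, dotProduct_smul, smul_eq_mul, ← hr]
    rw [lapForm_add_smul, hexpand, h.lapForm_eq] at hle
    linear_combination hle - 2 * t * hrr
  have hdiscrim := discrim_le_zero hvariation
  have hzero : r ⬝ᵥ r = 0 := by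
    rw [discrim] at hdiscrim
    nlinarith
  exact sub_eq_zero.mp (dotProduct_self_eq_zero.mp hzero)

end IsFiedler

theorem algCon_congr (f : G ≃g H) : algCon G = algCon H := by
  have hsurj : Function.Surjective fun x : W → ℝ => x ∘ f := f.injective.surjective_comp_right
  have hnonzero (x : W → ℝ) : x ∘ f ≠ 0 ↔ x ≠ 0 :=
    f.surjective.injective_comp_right.ne_iff' (Pi.zero_comp f)
  have hsum (x : W → ℝ) : ∑ v, (x ∘ f) v = ∑ w, x w := f.toEquiv.sum_comp x
  have hsq (x : W → ℝ) : ∑ v, (x ∘ f) v ^ 2 = ∑ w, x w ^ 2 :=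
    f.toEquiv.sum_comp fun w => x w ^ 2
  change sInf {r | ∃ x : V → ℝ, x ≠ 0 ∧ ∑ v, x v = 0 ∧ r = lapForm G x / ∑ v, x v ^ 2} =
    sInf {r | ∃ x : W → ℝ, x ≠ 0 ∧ ∑ w, x w = 0 ∧ r = lapForm H x / ∑ w, x w ^ 2}
  simp only [hsurj.exists, hnonzero, hsum, hsq, lapForm_comp_iso]

theorem IsFiedler.comp_iso {x : W → ℝ} (h : IsFiedler H x) (f : G ≃g H) :
    IsFiedler G (x ∘ f) where
  ne_zero := (f.surjective.injective_comp_right.ne_iff' (Pi.zero_comp f)).mpr h.ne_zero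
  sum_eq_zero := (f.toEquiv.sum_comp x).trans h.sum_eq_zero
  lapForm_eq := by
    rw [lapForm_comp_iso, algCon_congr f, h.lapForm_eq]
    exact congrArg _ (f.toEquiv.sum_comp fun w => x w ^ 2).symm

end Laplacian

namespace TwoConnected

variable {V W : Type*} {G : SimpleGraph V} {H : SimpleGraph W} {A : Set V} {u v w : V}

theorem of_iso (hG : TwoConnected G) (f : G ≃g H) : TwoConnected H := by
  obtain ⟨⟨a, b, hab⟩, hpaths⟩ := hG
  refine ⟨⟨f a, f b, f.injective.ne hab⟩, fun u v huv => ?_⟩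
  obtain ⟨u, rfl⟩ := f.surjective u
  obtain ⟨v, rfl⟩ := f.surjective v
  obtain ⟨p, q, hp, hq, hdisj⟩ := hpaths u v (ne_of_apply_ne f huv)
  refine ⟨p.map f.toHom, q.map f.toHom, hp.map f.injective, hq.map f.injective, fun w => ?_⟩
  obtain ⟨w, rfl⟩ := f.surjective w
  simpa using hdisj w

theorem exists_adj_avoiding (hG : TwoConnected G) (hu : u ∈ A) (hv : v ∉ A) (huw : u ≠ w)
    (hvw : v ≠ w) : ∃ p ∈ A, ∃ q ∉ A, p ≠ w ∧ q ≠ w ∧ G.Adj p q := by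
  have hne : u ≠ v := ne_of_mem_of_not_mem hu hv
  obtain ⟨P, hP⟩ : ∃ P : G.Walk u v, w ∉ P.support := by
    obtain ⟨p, q, -, -, hdisj⟩ := hG.2 u v hne
    by_cases hp : w ∈ p.support
    · exact ⟨q, fun hq => (hdisj w hp hq).elim huw.symm hvw.symm⟩
    · exact ⟨p, hp⟩
  obtain ⟨d, hd, hfst, hsnd⟩ := P.exists_boundary_dart A hu hv
  exact ⟨d.fst, hfst, d.snd, hsnd, fun h => hP (h ▸ P.dart_fst_mem_support_of_mem_darts hd),
    fun h => hP (h ▸ P.dart_snd_mem_support_of_mem_darts hd), d.adj⟩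

theorem nontrivial_boundary (hG : TwoConnected G) (hu : u ∈ A) (hv : v ∉ A) (huw : u ≠ w)
    (hvw : v ≠ w) : {e : V × V | e.1 ∈ A ∧ e.2 ∉ A ∧ G.Adj e.1 e.2}.Nontrivial := by
  obtain ⟨p, hp, q, hq, hpw, hqw, hpq⟩ := hG.exists_adj_avoiding hu hv huw hvw
  by_cases hw : w ∈ A
  · obtain ⟨p', hp', q', hq', hne, -, hpq'⟩ :=
      hG.exists_adj_avoiding hw hq hpw.symm (ne_of_mem_of_not_mem hp hq).symm
    exact ⟨(p, q), ⟨hp, hq, hpq⟩, (p', q'), ⟨hp', hq', hpq'⟩,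
      fun h => hne (Prod.ext_iff.mp h).1.symm⟩
  · obtain ⟨p', hp', q', hq', -, hne, hpq'⟩ :=
      hG.exists_adj_avoiding hp hw (ne_of_mem_of_not_mem hp hq) hqw.symm
    exact ⟨(p, q), ⟨hp, hq, hpq⟩, (p', q'), ⟨hp', hq', hpq'⟩,
      fun h => hne (Prod.ext_iff.mp h).2.symm⟩

end TwoConnected

section Crossing

variable {n : ℕ} {H : SimpleGraph (Fin n)} {f : ℕ → ℝ} {g h : ℕ}

open scoped Classical in
/-- The edges `ij` of `H` with `i ≤ g < j`: those crossing the cut between `g` and `g + 1`,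
written with the smaller endpoint first. -/
noncomputable def crossing (H : SimpleGraph (Fin n)) (g : ℕ) : Finset (Fin n × Fin n) :=
  {e | H.Adj e.1 e.2 ∧ e.1.val ≤ g ∧ g < e.2.val}

@[simp]
theorem mem_crossing {e : Fin n × Fin n} :
    e ∈ crossing H g ↔ H.Adj e.1 e.2 ∧ e.1.val ≤ g ∧ g < e.2.val := by
  simp [crossing]

theorem lapForm_eq_sum_lt [DecidableRel H.Adj] (x : Fin n → ℝ) :
    lapForm H x = ∑ e : Fin n × Fin n with H.Adj e.1 e.2 ∧ e.1 < e.2, (x e.2 - x e.1) ^ 2 := by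
  have hsplit (i j : Fin n) : (if H.Adj i j then (x i - x j) ^ 2 else 0) =
      (if H.Adj i j ∧ i < j then (x j - x i) ^ 2 else 0) +
        if H.Adj j i ∧ j < i then (x i - x j) ^ 2 else 0 := by
    obtain h | rfl | h := lt_trichotomy i j
    · simp [h, h.not_gt, sub_sq_comm (x i)]
    · simp
    · simp [h, h.not_gt, H.adj_comm]
  rw [lapForm_eq_sum, Finset.sum_filter, Fintype.sum_prod_type]
  simp only [hsplit, Finset.sum_add_distrib]
  rw [Finset.sum_comm (f := fun i j => if H.Adj j i ∧ j < i then (x i - x j) ^ 2 else 0)]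
  ring

/-- Each edge `ij` contributes `(f j - f i)² = (∑ i ≤ g < j, (f (g + 1) - f g))²`. -/
theorem lapForm_eq_sum_crossing (f : ℕ → ℝ) :
    lapForm H (fun i => f i) = ∑ g ∈ Finset.range (n - 1), ∑ h ∈ Finset.range (n - 1),
      #(crossing H g ∩ crossing H h) * ((f (g + 1) - f g) * (f (h + 1) - f h)) := by
  classical
  have htelescope (i j : Fin n) (hij : i < j) : f j - f i =
      ∑ g ∈ Finset.range (n - 1), if i.val ≤ g ∧ g < j.val then f (g + 1) - f g else 0 := by
    rw [← Finset.sum_filter, ← Finset.sum_Ico_sub f hij.le]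
    congr 1
    ext g
    simp only [Finset.mem_filter, Finset.mem_range, Finset.mem_Ico]
    omega
  have hedge (e : Fin n × Fin n) (he : e.1 < e.2) : (f e.2 - f e.1) ^ 2 =
      ∑ g ∈ Finset.range (n - 1), ∑ h ∈ Finset.range (n - 1),
        if (e.1.val ≤ g ∧ g < e.2.val) ∧ e.1.val ≤ h ∧ h < e.2.val then
          (f (g + 1) - f g) * (f (h + 1) - f h) else 0 := by
    simp only [htelescope e.1 e.2 he, sq, Finset.sum_mul_sum, ite_zero_mul_ite_zero]
  rw [lapForm_eq_sum_lt, Finset.sum_congr rfl fun e he => hedge e (Finset.mem_filter.mp he).2.2,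
    Finset.sum_comm]
  refine Finset.sum_congr rfl fun g _ => ?_
  rw [Finset.sum_comm]
  refine Finset.sum_congr rfl fun h _ => ?_
  rw [← Finset.sum_filter, Finset.sum_const, Finset.filter_filter, nsmul_eq_mul]
  congr 3
  ext e
  simp only [Finset.mem_filter_univ, Finset.mem_inter, mem_crossing, Fin.lt_def]
  grind

theorem two_le_card_crossing (hH : TwoConnected H) (hn : 3 ≤ n) (hg : g + 1 < n) :
    2 ≤ #(crossing H g) := by
  have hboundary := hH.nontrivial_boundary (A := {a | a.val ≤ g}) (u := ⟨0, by omega⟩)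
    (v := ⟨n - 1, by omega⟩) (w := ⟨1, by omega⟩) g.zero_le (show ¬n - 1 ≤ g by omega)
    (Fin.ne_of_val_ne zero_ne_one) (Fin.ne_of_val_ne (by dsimp only; omega))
  refine Finset.one_lt_card_iff_nontrivial.mpr (hboundary.mono fun e he => ?_)
  simpa using ⟨he.2.2, he.1, not_le.mp he.2.1⟩

theorem card_crossing_inter_succ_pos (hH : TwoConnected H) (hg : g + 2 < n) :
    0 < #(crossing H g ∩ crossing H (g + 1)) := by
  obtain ⟨p, hp, q, hq, -, hqw, hadj⟩ := hH.exists_adj_avoiding (A := {a | a.val ≤ g})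
    (u := ⟨g, by omega⟩) (v := ⟨g + 2, hg⟩) (w := ⟨g + 1, by omega⟩) (le_refl g)
    (show ¬g + 2 ≤ g by omega) (Fin.ne_of_val_ne g.succ_ne_self.symm)
    (Fin.ne_of_val_ne (g + 1).succ_ne_self)
  have hpg : p.val ≤ g := hp
  have hgq : ¬q.val ≤ g := hq
  have hqw : q.val ≠ g + 1 := Fin.val_ne_of_ne hqw
  refine Finset.card_pos.mpr ⟨(p, q), ?_⟩
  simp only [Finset.mem_inter, mem_crossing, hadj, true_and]
  omega

end Crossing

section FoldedCycle

variable {n : ℕ} {H : SimpleGraph (Fin n)} {f : ℕ → ℝ} {g h : ℕ}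

/-- The `n`-cycle folded flat: its vertices `v₀, v₁, v_{n-1}, v₂, v_{n-2}, …` are renumbered
`0, 1, 2, 3, 4, …`, so that the edges are `{0, 1}`, all `{a, a + 2}`, and `{n - 2, n - 1}`. -/
def foldedCycle (n : ℕ) : SimpleGraph (Fin n) :=
  fromRel fun a b => (a.val = 0 ∧ b.val = 1) ∨ b.val = a.val + 2 ∨ (a.val + 2 = n ∧ b.val + 1 = n)

theorem foldedCycle_adj {a b : Fin n} : (foldedCycle n).Adj a b ↔
    (a.val = 0 ∧ b.val = 1) ∨ (b.val = 0 ∧ a.val = 1) ∨ b.val = a.val + 2 ∨ a.val = b.val + 2 ∨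
      (a.val + 2 = n ∧ b.val + 1 = n) ∨ (b.val + 2 = n ∧ a.val + 1 = n) := by
  rw [foldedCycle, fromRel_adj, Ne, Fin.ext_iff]
  omega

theorem cycleGraph_adj_iff_val (hn : 2 ≤ n) {u v : Fin n} : (cycleGraph n).Adj u v ↔
    u.val + 1 = v.val ∨ v.val + 1 = u.val ∨ (u.val = 0 ∧ v.val + 1 = n) ∨
      (v.val = 0 ∧ u.val + 1 = n) := by
  have hu := u.isLt
  have hv := v.isLt
  rw [cycleGraph_adj', Fin.sub_def, Fin.sub_def]
  dsimp only
  obtain h | h | h := lt_trichotomy u.val v.val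
  · rw [Nat.mod_eq_of_lt (a := n - v + u) (by omega), Nat.mod_eq_sub_mod (by omega),
      Nat.mod_eq_of_lt (by omega)]
    omega
  · rw [h]
    simp
    omega
  · rw [Nat.mod_eq_of_lt (a := n - u + v) (by omega), Nat.mod_eq_sub_mod (by omega),
      Nat.mod_eq_of_lt (by omega)]
    omega

theorem nonempty_cycleGraph_iso_foldedCycle (hn : 2 ≤ n) :
    Nonempty (cycleGraph n ≃g foldedCycle n) := by
  let fold (k : Fin n) : Fin n :=
    ⟨if 2 * k.val ≤ n then 2 * k - 1 else 2 * (n - k), by split <;> omega⟩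
  have hfold (k : Fin n) :
      (fold k).val = if 2 * k.val ≤ n then 2 * k.val - 1 else 2 * (n - k) := rfl
  have hinj : Function.Injective fold := fun k l hkl => by
    have := congrArg Fin.val hkl
    rw [hfold, hfold] at this
    ext
    split_ifs at this <;> omega
  refine ⟨Equiv.ofBijective fold (Finite.injective_iff_bijective.mp hinj), fun {k l} => ?_⟩
  rw [Equiv.ofBijective_apply, Equiv.ofBijective_apply, foldedCycle_adj,
    cycleGraph_adj_iff_val hn, hfold, hfold]
  split_ifs <;> omega

theorem card_crossing_foldedCycle_le (n g : ℕ) : #(crossing (foldedCycle n) g) ≤ 2 := by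
  have hmaps (e) (he : e ∈ crossing (foldedCycle n) g) :
      e.1.val + e.2.val ∈ ({max (2 * g) 1, min (2 * g + 2) (2 * n - 3)} : Finset ℕ) := by
    rw [mem_crossing, foldedCycle_adj] at he
    rw [Finset.mem_insert, Finset.mem_singleton]
    omega
  refine (Finset.card_le_card_of_injOn _ hmaps fun e he e' he' heq => ?_).trans Finset.card_le_two
  rw [Finset.mem_coe, mem_crossing, foldedCycle_adj] at he he'
  rw [Prod.ext_iff, Fin.ext_iff, Fin.ext_iff]
  omega

theorem card_crossing_foldedCycle_inter_succ_le (n g : ℕ) :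
    #(crossing (foldedCycle n) g ∩ crossing (foldedCycle n) (g + 1)) ≤ 1 := by
  refine Finset.card_le_one.mpr fun e he e' he' => ?_
  simp only [Finset.mem_inter, mem_crossing, foldedCycle_adj] at he he'
  rw [Prod.ext_iff, Fin.ext_iff, Fin.ext_iff]
  omega

theorem crossing_foldedCycle_inter_eq_empty (hgh : g + 2 ≤ h) :
    crossing (foldedCycle n) g ∩ crossing (foldedCycle n) h = ∅ := by
  refine Finset.eq_empty_of_forall_notMem fun e he => ?_
  simp only [Finset.mem_inter, mem_crossing, foldedCycle_adj] at he
  omega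

theorem card_crossing_foldedCycle_inter_le (hH : TwoConnected H) (hn : 3 ≤ n) (hg : g + 1 < n)
    (hh : h + 1 < n) : #(crossing (foldedCycle n) g ∩ crossing (foldedCycle n) h) ≤
      #(crossing H g ∩ crossing H h) := by
  wlog hgh : g ≤ h generalizing g h
  · rw [Finset.inter_comm, Finset.inter_comm (crossing H g)]
    exact this hh hg (not_le.mp hgh).le
  obtain rfl | hgh := hgh.eq_or_lt
  · rw [Finset.inter_self, Finset.inter_self]
    exact (card_crossing_foldedCycle_le n g).trans (two_le_card_crossing hH hn hg)
  obtain rfl | hgh := (Nat.succ_le_of_lt hgh).eq_or_lt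
  · exact (card_crossing_foldedCycle_inter_succ_le n g).trans (card_crossing_inter_succ_pos hH hh)
  · simp [crossing_foldedCycle_inter_eq_empty (n := n) (Nat.succ_le_of_lt hgh)]

theorem card_crossing_foldedCycle_inter_mul_le (hH : TwoConnected H) (hn : 3 ≤ n)
    (hf : Monotone f) (hg : g ∈ Finset.range (n - 1)) (hh : h ∈ Finset.range (n - 1)) :
    #(crossing (foldedCycle n) g ∩ crossing (foldedCycle n) h) *
        ((f (g + 1) - f g) * (f (h + 1) - f h)) ≤
      #(crossing H g ∩ crossing H h) * ((f (g + 1) - f g) * (f (h + 1) - f h)) := by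
  rw [Finset.mem_range] at hg hh
  exact mul_le_mul_of_nonneg_right
    (mod_cast card_crossing_foldedCycle_inter_le hH hn (by omega) (by omega))
    (mul_nonneg (sub_nonneg.mpr (hf g.le_succ)) (sub_nonneg.mpr (hf h.le_succ)))

theorem lapForm_foldedCycle_le (hH : TwoConnected H) (hn : 3 ≤ n) (hf : Monotone f) :
    lapForm (foldedCycle n) (fun i => f i) ≤ lapForm H fun i => f i := by
  rw [lapForm_eq_sum_crossing, lapForm_eq_sum_crossing]
  exact Finset.sum_le_sum fun g hg => Finset.sum_le_sum fun h hh =>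
    card_crossing_foldedCycle_inter_mul_le hH hn hf hg hh

theorem card_crossing_inter_le (hH : TwoConnected H) (hn : 3 ≤ n) (hf : Monotone f)
    (hle : lapForm H (fun i => f i) ≤ lapForm (foldedCycle n) fun i => f i)
    (hg : g + 1 < n) (hh : h + 1 < n) (hfg : f g < f (g + 1)) (hfh : f h < f (h + 1)) :
    #(crossing H g ∩ crossing H h) ≤
      #(crossing (foldedCycle n) g ∩ crossing (foldedCycle n) h) := by
  by_contra! hcard
  have hg : g ∈ Finset.range (n - 1) := Finset.mem_range.mpr (by omega)
  have hh : h ∈ Finset.range (n - 1) := Finset.mem_range.mpr (by omega)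
  have hterm {g} (hg : g ∈ Finset.range (n - 1)) {h} (hh : h ∈ Finset.range (n - 1)) :=
    card_crossing_foldedCycle_inter_mul_le hH hn hf hg hh
  rw [lapForm_eq_sum_crossing, lapForm_eq_sum_crossing] at hle
  refine hle.not_gt <| Finset.sum_lt_sum
    (fun g hg => Finset.sum_le_sum fun h hh => hterm hg hh)
    ⟨g, hg, Finset.sum_lt_sum (fun h hh => hterm hg hh) ⟨h, hh, ?_⟩⟩
  exact mul_lt_mul_of_pos_right (mod_cast hcard) (mul_pos (sub_pos.mpr hfg) (sub_pos.mpr hfh))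

theorem lapForm_eq_foldedCycle (hH : TwoConnected H) (hn : 3 ≤ n) (hf : Monotone f)
    (hfiedler : IsFiedler H fun i => f i) (hle : algCon H ≤ algCon (cycleGraph n)) :
    lapForm H (fun i => f i) = lapForm (foldedCycle n) fun i => f i := by
  obtain ⟨e⟩ := nonempty_cycleGraph_iso_foldedCycle (n := n) (by omega)
  refine le_antisymm ?_ (lapForm_foldedCycle_le hH hn hf)
  calc lapForm H (fun i => f i) = algCon H * ∑ i : Fin n, f i ^ 2 := hfiedler.lapForm_eq
    _ ≤ algCon (foldedCycle n) * ∑ i : Fin n, f i ^ 2 := by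
      rw [← algCon_congr e]
      gcongr
    _ ≤ lapForm (foldedCycle n) fun i => f i := algCon_mul_le _ hfiedler.sum_eq_zero

theorem isFiedler_foldedCycle (hH : TwoConnected H) (hn : 3 ≤ n) (hf : Monotone f)
    (hfiedler : IsFiedler H fun i => f i) (hle : algCon H ≤ algCon (cycleGraph n)) :
    IsFiedler (foldedCycle n) fun i => f i where
  ne_zero := hfiedler.ne_zero
  sum_eq_zero := hfiedler.sum_eq_zero
  lapForm_eq := by
    obtain ⟨e⟩ := nonempty_cycleGraph_iso_foldedCycle (n := n) (by omega)
    refine le_antisymm ?_ (algCon_mul_le _ hfiedler.sum_eq_zero)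
    rw [← lapForm_eq_foldedCycle hH hn hf hfiedler hle, hfiedler.lapForm_eq, ← algCon_congr e]
    gcongr

/-- The neighbour of `a` in `foldedCycle n` below it, which for the lowest vertex `0` is `1`. For
`a = 1` the truncated difference `1 - 2 = 0` is the right value. -/
def lowerNeighbor (a : ℕ) : ℕ := if a = 0 then 1 else a - 2

/-- The neighbour of `a` in `foldedCycle n` above it, which for the top vertex `n - 1` is
`n - 2`. -/
def upperNeighbor (n a : ℕ) : ℕ := if a + 1 = n then n - 2 else min (a + 2) (n - 1)

theorem lapMatrix_foldedCycle_mulVec [DecidableRel (foldedCycle n).Adj] (hn : 3 ≤ n) (f : ℕ → ℝ)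
    (a : Fin n) : ((foldedCycle n).lapMatrix ℝ *ᵥ fun i => f i) a =
      2 * f a - (f (lowerNeighbor a) + f (upperNeighbor n a)) := by
  have hlower : lowerNeighbor a < n := by grind [lowerNeighbor]
  have hupper : upperNeighbor n a < n := by grind [upperNeighbor]
  have hne : (⟨lowerNeighbor a, hlower⟩ : Fin n) ≠ ⟨upperNeighbor n a, hupper⟩ :=
    Fin.ne_of_val_ne (by grind [lowerNeighbor, upperNeighbor])
  have hneighbors : (foldedCycle n).neighborFinset a =
      {⟨lowerNeighbor a, hlower⟩, ⟨upperNeighbor n a, hupper⟩} := by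
    ext b
    rw [mem_neighborFinset, foldedCycle_adj, Finset.mem_insert, Finset.mem_singleton,
      Fin.ext_iff, Fin.ext_iff]
    dsimp only [lowerNeighbor, upperNeighbor]
    split_ifs <;> omega
  rw [lapMatrix_mulVec_apply, ← card_neighborFinset_eq_degree, hneighbors,
    Finset.card_pair hne, Finset.sum_pair hne]
  norm_num

theorem add_neighbors_eq (hn : 3 ≤ n) (hfiedler : IsFiedler (foldedCycle n) fun i => f i)
    (hg : g < n) (hh : h < n) (heq : f g = f h) :
    f (lowerNeighbor g) + f (upperNeighbor n g) = f (lowerNeighbor h) + f (upperNeighbor n h) := by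
  classical
  have heigen (a : Fin n) := congrFun hfiedler.lapMatrix_mulVec a
  simp only [lapMatrix_foldedCycle_mulVec hn, Pi.smul_apply, smul_eq_mul] at heigen
  have hEg := heigen ⟨g, hg⟩
  have hEh := heigen ⟨h, hh⟩
  dsimp only at hEg hEh
  rw [heq] at hEg
  linarith

theorem eq_succ_iff_add_two (hn : 3 ≤ n) (hf : Monotone f)
    (hfiedler : IsFiedler (foldedCycle n) fun i => f i) (hg : g + 3 < n) :
    f g = f (g + 1) ↔ f (g + 2) = f (g + 3) := by
  constructor <;> intro heq <;> refine le_antisymm (hf (by omega)) ?_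
  · have hsum := add_neighbors_eq hn hfiedler (by omega) (by omega) heq
    have hlower : f (lowerNeighbor g) ≤ f (lowerNeighbor (g + 1)) := by
      obtain rfl | hpos := g.eq_zero_or_pos
      · exact heq.ge
      · exact hf (by grind [lowerNeighbor])
    have hupper : upperNeighbor n g = g + 2 ∧ upperNeighbor n (g + 1) = g + 3 := by
      grind [upperNeighbor]
    rw [hupper.1, hupper.2] at hsum
    linarith
  · have hsum := add_neighbors_eq hn hfiedler (by omega) (by omega) heq
    have hupper : f (upperNeighbor n (g + 2)) ≤ f (upperNeighbor n (g + 3)) := by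
      obtain rfl | hlt := (show g + 4 ≤ n from hg).eq_or_lt
      · have htop : upperNeighbor (g + 4) (g + 2) = g + 3 ∧
            upperNeighbor (g + 4) (g + 3) = g + 2 := by grind [upperNeighbor]
        rw [htop.1, htop.2, heq]
      · exact hf (by grind [upperNeighbor])
    have hlower : lowerNeighbor (g + 2) = g ∧ lowerNeighbor (g + 3) = g + 1 := by
      grind [lowerNeighbor]
    rw [hlower.1, hlower.2] at hsum
    linarith

theorem eq_succ_iff_add_two_mul (hn : 3 ≤ n) (hf : Monotone f)
    (hfiedler : IsFiedler (foldedCycle n) fun i => f i) (k : ℕ) (hg : g + 2 * k + 1 < n) :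
    f (g + 2 * k) = f (g + 2 * k + 1) ↔ f g = f (g + 1) := by
  induction k with
  | zero => rfl
  | succ k ih => exact (eq_succ_iff_add_two hn hf hfiedler hg).symm.trans (ih (by omega))

theorem eq_succ_zero_imp_ne (hn : 3 ≤ n) (hf : Monotone f)
    (hfiedler : IsFiedler (foldedCycle n) fun i => f i) (h0 : f 0 = f 1) : f 1 ≠ f 2 := by
  intro h1
  have hstep (g : ℕ) (hg : g + 1 < n) : f (g + 1) = f g := by
    obtain ⟨k, rfl | rfl⟩ := g.even_or_odd'
    · simpa using ((eq_succ_iff_add_two_mul hn hf hfiedler (g := 0) k (by omega)).mpr h0).symm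
    · simpa [add_comm] using
        ((eq_succ_iff_add_two_mul hn hf hfiedler (g := 1) k (by omega)).mpr h1).symm
  have hconst (g : ℕ) (hg : g < n) : f g = f 0 := by
    induction g with
    | zero => rfl
    | succ g ih => rw [hstep g hg, ih (by omega)]
  have hsum := hfiedler.sum_eq_zero
  simp only [fun i : Fin n => hconst i i.isLt, Finset.sum_const, Finset.card_univ,
    Fintype.card_fin, nsmul_eq_mul] at hsum
  have hzero : f 0 = 0 := (mul_eq_zero.mp hsum).resolve_left (by norm_cast; omega)
  exact hfiedler.ne_zero (funext fun i => (hconst i i.isLt).trans hzero)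

theorem lt_succ_even_or_odd (hn : 3 ≤ n) (hf : Monotone f)
    (hfiedler : IsFiedler (foldedCycle n) fun i => f i) :
    (∀ k, 2 * k + 1 < n → f (2 * k) < f (2 * k + 1)) ∨
      ∀ k, 2 * k + 2 < n → f (2 * k + 1) < f (2 * k + 2) := by
  by_cases h0 : f 0 = f 1
  · refine .inr fun k hk => (hf (Nat.le_succ _)).lt_of_ne fun heq => ?_
    refine eq_succ_zero_imp_ne hn hf hfiedler h0 ?_
    exact (eq_succ_iff_add_two_mul hn hf hfiedler (g := 1) k (by omega)).mp
      (by simpa [add_comm, add_assoc] using heq)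
  · refine .inl fun k hk => (hf (Nat.le_succ _)).lt_of_ne fun heq => h0 ?_
    exact (eq_succ_iff_add_two_mul hn hf hfiedler (g := 0) k (by omega)).mp (by simpa using heq)

end FoldedCycle

section Layered

variable {n m k : ℕ}

/-- A graph on `Fin n` viewed as a graph on `ℕ`. -/
def valGraph (H : SimpleGraph (Fin n)) : SimpleGraph ℕ := H.map Fin.valEmbedding

theorem valGraph_adj {H : SimpleGraph (Fin n)} {a b : ℕ} :
    (valGraph H).Adj a b ↔ ∃ (ha : a < n) (hb : b < n), H.Adj ⟨a, ha⟩ ⟨b, hb⟩ := by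
  rw [valGraph, map_adj]
  constructor
  · rintro ⟨a, b, hab, rfl, rfl⟩
    exact ⟨a.isLt, b.isLt, hab⟩
  · rintro ⟨ha, hb, hab⟩
    exact ⟨_, _, hab, rfl, rfl⟩

theorem valGraph_adj_val {H : SimpleGraph (Fin n)} {a b : Fin n} :
    (valGraph H).Adj a b ↔ H.Adj a b := by
  simp [valGraph_adj]

theorem exists_valGraph_adj_avoiding {H : SimpleGraph (Fin n)} (hH : TwoConnected H) {A : Set ℕ}
    {u v w : ℕ} (hun : u < n) (hvn : v < n) (hwn : w < n) (hu : u ∈ A) (hv : v ∉ A) (huw : u ≠ w)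
    (hvw : v ≠ w) :
    ∃ p ∈ A, ∃ q ∉ A, p ≠ w ∧ q ≠ w ∧ (valGraph H).Adj p q := by
  obtain ⟨p, hp, q, hq, hpw, hqw, hpq⟩ := hH.exists_adj_avoiding (A := Fin.val ⁻¹' A)
    (u := ⟨u, hun⟩) (v := ⟨v, hvn⟩) (w := ⟨w, hwn⟩) hu hv (Fin.ne_of_val_ne huw)
    (Fin.ne_of_val_ne hvw)
  exact ⟨p, hp, q, hq, Fin.val_ne_of_ne hpw, Fin.val_ne_of_ne hqw,
    valGraph_adj_val.mpr hpq⟩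

/-- The vertices of `foldedCycle (2 * m + 1)` at distance `k` from `0` are `2 * k - 1` and
`2 * k`. -/
def level (a : ℕ) : ℕ := (a + 1) / 2

/-- The combinatorial constraints on a 2-connected graph whose monotone Fiedler vector increases
strictly between consecutive levels. -/
structure IsLayered (H : SimpleGraph (Fin (2 * m + 1))) : Prop where
  twoConnected : TwoConnected H
  level_le_succ {a b : Fin (2 * m + 1)} : H.Adj a b → level b ≤ level a + 1
  card_crossing_le_two {k : ℕ} : k < m → #(crossing H (2 * k)) ≤ 2

theorem isLayered_of_lt_succ {H : SimpleGraph (Fin (2 * m + 1))} {f : ℕ → ℝ}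
    (hH : TwoConnected H) (hm : 0 < m) (hf : Monotone f)
    (hle : lapForm H (fun i => f i) ≤ lapForm (foldedCycle (2 * m + 1)) fun i => f i)
    (hlt : ∀ k < m, f (2 * k) < f (2 * k + 1)) : IsLayered H where
  twoConnected := hH
  level_le_succ {a b} hab := by
    by_contra! hlevel
    dsimp only [level] at hlevel
    have hle := card_crossing_inter_le hH (by omega) hf hle (g := 2 * level a)
      (h := 2 * (level a + 1)) (by grind [level]) (by grind [level]) (hlt _ (by grind [level]))
      (hlt _ (by grind [level]))
    rw [crossing_foldedCycle_inter_eq_empty (by omega), Finset.card_empty, Nat.le_zero,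
      Finset.card_eq_zero] at hle
    refine Finset.eq_empty_iff_forall_notMem.mp hle (a, b) ?_
    simp only [Finset.mem_inter, mem_crossing, hab, true_and, level]
    omega
  card_crossing_le_two {k} hk := by
    have hle := card_crossing_inter_le hH (by omega) hf hle (g := 2 * k) (h := 2 * k) (by omega)
      (by omega) (hlt k hk) (hlt k hk)
    rw [Finset.inter_self, Finset.inter_self] at hle
    exact hle.trans (card_crossing_foldedCycle_le _ _)

/-- Whether the isomorphism of a layered graph with a symmetric chord cycle exchanges the two
vertices of level `k`, so that the edges to level `k + 1` join vertices on the same side. The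
truncated difference `2 * 0 - 1` makes the vertex `0` play the role of both vertices of level
`0`. -/
def IsFlipped (H : SimpleGraph (Fin n)) : ℕ → Prop
  | 0 => False
  | k + 1 => Xor (IsFlipped H k) ((valGraph H).Adj (2 * k - 1) (2 * k + 2))

/-- Whether `a` is sent to the side `v_{n-1}, v_{n-2}, …` of the cycle (as opposed to
`v₀, v₁, v₂, …`). -/
def IsBackward (H : SimpleGraph (Fin n)) (a : ℕ) : Prop :=
  Xor (Odd a) (IsFlipped H (level a))

open scoped Classical in
/-- The index on the cycle `v₀ v₁ ⋯ v_{n-1}` of the vertex `a` of a layered graph. -/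
noncomputable def cyclePosition (H : SimpleGraph (Fin n)) (a : ℕ) : ℕ :=
  if IsBackward H a then n - level a else level a

open scoped Classical in
/-- The levels, other than the top one, whose two vertices are adjacent. -/
noncomputable def chordLevels (H : SimpleGraph (Fin (2 * m + 1))) : Finset ℕ :=
  {k ∈ Finset.Icc 1 (m - 1) | (valGraph H).Adj (2 * k - 1) (2 * k)}

theorem mem_chordLevels {H : SimpleGraph (Fin (2 * m + 1))} : k ∈ chordLevels H ↔
    k ∈ Finset.Icc 1 (m - 1) ∧ (valGraph H).Adj (2 * k - 1) (2 * k) := by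
  simp [chordLevels]

theorem isBackward_two_mul_sub_one {H : SimpleGraph (Fin n)} (hk : 1 ≤ k) :
    IsBackward H (2 * k - 1) ↔ ¬IsFlipped H k := by
  have hodd : Odd (2 * k - 1) := ⟨k - 1, by omega⟩
  rw [IsBackward, show level (2 * k - 1) = k by dsimp only [level]; omega]
  simp [Xor, hodd]

theorem isBackward_two_mul {H : SimpleGraph (Fin n)} :
    IsBackward H (2 * k) ↔ IsFlipped H k := by
  rw [IsBackward, show level (2 * k) = k by dsimp only [level]; omega]
  simp [Xor]

namespace IsLayered

variable {H : SimpleGraph (Fin (2 * m + 1))} (hH : IsLayered H)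
include hH

theorem level_le_succ_of_valGraph_adj {a b : ℕ} (hab : (valGraph H).Adj a b) :
    level b ≤ level a + 1 := by
  obtain ⟨ha, hb, hab⟩ := valGraph_adj.mp hab
  exact hH.level_le_succ hab

theorem exists_adj_lower (hk : k < m) {b : ℕ} (hb : b = 2 * k + 1 ∨ b = 2 * k + 2) :
    (valGraph H).Adj (2 * k - 1) b ∨ (valGraph H).Adj (2 * k) b := by
  obtain ⟨p, hp, q, hq, -, hqw, hpq⟩ := exists_valGraph_adj_avoiding hH.twoConnected
    (A := Set.Iic (2 * k)) (u := 2 * k) (v := b) (w := 4 * k + 3 - b) (by omega) (by omega)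
    (by omega) (Set.mem_Iic.mpr le_rfl) (by rw [Set.mem_Iic]; omega) (by omega) (by omega)
  have hlevel := hH.level_le_succ_of_valGraph_adj hpq
  rw [Set.mem_Iic] at hp hq
  dsimp only [level] at hlevel
  obtain ⟨rfl, rfl | rfl⟩ : q = b ∧ (p = 2 * k - 1 ∨ p = 2 * k) := by omega
  exacts [.inl hpq, .inr hpq]

theorem exists_adj_upper (hk₁ : 1 ≤ k) (hk : k < m) {a : ℕ} (ha : a = 2 * k - 1 ∨ a = 2 * k) :
    (valGraph H).Adj a (2 * k + 1) ∨ (valGraph H).Adj a (2 * k + 2) := by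
  obtain ⟨p, hp, q, hq, hpw, -, hpq⟩ := exists_valGraph_adj_avoiding hH.twoConnected
    (A := Set.Iic (2 * k)) (u := a) (v := 2 * k + 1) (w := 4 * k - 1 - a) (by omega) (by omega)
    (by omega) (by rw [Set.mem_Iic]; omega) (by rw [Set.mem_Iic]; omega) (by omega) (by omega)
  have hlevel := hH.level_le_succ_of_valGraph_adj hpq
  rw [Set.mem_Iic] at hp hq
  dsimp only [level] at hlevel
  obtain ⟨rfl, rfl | rfl⟩ : p = a ∧ (q = 2 * k + 1 ∨ q = 2 * k + 2) := by omega
  exacts [.inl hpq, .inr hpq]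

theorem eq_of_crossing (hk : k < m) {d e f : ℕ × ℕ}
    (hd : (valGraph H).Adj d.1 d.2 ∧ d.1 ≤ 2 * k ∧ 2 * k < d.2)
    (he : (valGraph H).Adj e.1 e.2 ∧ e.1 ≤ 2 * k ∧ 2 * k < e.2)
    (hf : (valGraph H).Adj f.1 f.2 ∧ f.1 ≤ 2 * k ∧ 2 * k < f.2) : d = e ∨ d = f ∨ e = f := by
  obtain ⟨hd₁, hd₂, hdadj⟩ := valGraph_adj.mp hd.1
  obtain ⟨he₁, he₂, headj⟩ := valGraph_adj.mp he.1
  obtain ⟨hf₁, hf₂, hfadj⟩ := valGraph_adj.mp hf.1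
  by_contra! hne
  refine (hH.card_crossing_le_two hk).not_gt (Finset.two_lt_card.mpr
    ⟨(⟨d.1, hd₁⟩, ⟨d.2, hd₂⟩), ?_, (⟨e.1, he₁⟩, ⟨e.2, he₂⟩), ?_, (⟨f.1, hf₁⟩, ⟨f.2, hf₂⟩), ?_, ?_⟩)
  · exact mem_crossing.mpr ⟨hdadj, hd.2⟩
  · exact mem_crossing.mpr ⟨headj, he.2⟩
  · exact mem_crossing.mpr ⟨hfadj, hf.2⟩
  · simpa [Prod.ext_iff] using hne

theorem levels_matched (hk₁ : 1 ≤ k) (hk : k < m) :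
    ((valGraph H).Adj (2 * k - 1) (2 * k + 1) ↔ (valGraph H).Adj (2 * k) (2 * k + 2)) ∧
      ((valGraph H).Adj (2 * k - 1) (2 * k + 2) ↔ (valGraph H).Adj (2 * k) (2 * k + 1)) ∧
      ((valGraph H).Adj (2 * k - 1) (2 * k + 1) ↔ ¬(valGraph H).Adj (2 * k - 1) (2 * k + 2)) := by
  have hlower₁ := hH.exists_adj_lower hk (.inl rfl)
  have hlower₂ := hH.exists_adj_lower hk (.inr rfl)
  have hupper₁ := hH.exists_adj_upper hk₁ hk (.inl rfl)
  have hupper₂ := hH.exists_adj_upper hk₁ hk (.inr rfl)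
  have hthree (a b c d e f : ℕ) := hH.eq_of_crossing hk (d := (a, b)) (e := (c, d)) (f := (e, f))
  simp only [Prod.mk.injEq] at hthree
  have h₁ := hthree (2 * k - 1) (2 * k + 1) (2 * k - 1) (2 * k + 2) (2 * k) (2 * k + 1)
  have h₂ := hthree (2 * k - 1) (2 * k + 1) (2 * k - 1) (2 * k + 2) (2 * k) (2 * k + 2)
  have h₃ := hthree (2 * k - 1) (2 * k + 1) (2 * k) (2 * k + 1) (2 * k) (2 * k + 2)
  have h₄ := hthree (2 * k - 1) (2 * k + 2) (2 * k) (2 * k + 1) (2 * k) (2 * k + 2)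
  clear hthree
  grind

theorem exists_forall_adj_lower_eq (hk : k < m) :
    ∃ w < 2 * k + 1, ∀ a < 2 * k + 1, (valGraph H).Adj a (2 * k + 1) → a = w := by
  have hmem {a : ℕ} (ha : a < 2 * k + 1) (hadj : (valGraph H).Adj a (2 * k + 1)) :
      a = 2 * k - 1 ∨ a = 2 * k := by
    have hlevel := hH.level_le_succ_of_valGraph_adj hadj
    dsimp only [level] at hlevel
    omega
  obtain rfl | hk₁ := k.eq_zero_or_pos
  · exact ⟨0, by omega, fun a ha _ => by omega⟩
  obtain ⟨-, hcross, hstraight⟩ := hH.levels_matched hk₁ hk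
  by_cases hadj : (valGraph H).Adj (2 * k - 1) (2 * k + 1)
  · refine ⟨2 * k - 1, by omega, fun a ha ha' => (hmem ha ha').resolve_right ?_⟩
    rintro rfl
    exact hstraight.mp hadj (hcross.mpr ha')
  · refine ⟨2 * k, by omega, fun a ha ha' => (hmem ha ha').resolve_left ?_⟩
    rintro rfl
    exact hadj ha'

theorem adj_top (hk : k + 1 = m) : (valGraph H).Adj (2 * k + 1) (2 * k + 2) := by
  obtain ⟨w, hw, hunique⟩ := hH.exists_forall_adj_lower_eq (k := k) (by omega)
  obtain ⟨p, rfl, q, hq, -, hqw, hpq⟩ := exists_valGraph_adj_avoiding hH.twoConnected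
    (A := {2 * k + 1}) (u := 2 * k + 1) (v := 2 * k + 2) (w := w) (by omega) (by omega)
    (by omega) rfl (by simp) (by omega) (by omega)
  have hqlt : q < 2 * k + 3 := by
    obtain ⟨-, hq, -⟩ := valGraph_adj.mp hpq
    omega
  have hle : 2 * k + 1 ≤ q := not_lt.mp fun hlt => hqw (hunique q hlt hpq.symm)
  rwa [show q = 2 * k + 2 by rw [Set.mem_singleton_iff] at hq; omega] at hpq

theorem adj_zero (hm : 0 < m) {b : ℕ} (hb : b = 1 ∨ b = 2) : (valGraph H).Adj 0 b := by
  simpa using hH.exists_adj_lower hm hb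

theorem adj_iff_isBackward_iff {a b : ℕ} (ha : 0 < a) (hb : b < 2 * m + 1)
    (hlevel : level b = level a + 1) :
    (valGraph H).Adj a b ↔ (IsBackward H a ↔ IsBackward H b) := by
  obtain ⟨k, hk⟩ : ∃ k, level a = k := ⟨_, rfl⟩
  dsimp only [level] at hlevel hk
  obtain ⟨h₁, h₂, h₃⟩ := hH.levels_matched (k := k) (by omega) (by omega)
  have ha₁ : IsBackward H (2 * k - 1) ↔ ¬IsFlipped H k := isBackward_two_mul_sub_one (by omega)
  have ha₂ : IsBackward H (2 * k) ↔ IsFlipped H k := isBackward_two_mul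
  have hb₁ : IsBackward H (2 * k + 1) ↔ ¬IsFlipped H (k + 1) :=
    isBackward_two_mul_sub_one (k := k + 1) (by omega)
  have hb₂ : IsBackward H (2 * k + 2) ↔ IsFlipped H (k + 1) := isBackward_two_mul (k := k + 1)
  rw [IsFlipped, xor_iff_iff_not] at hb₁ hb₂
  obtain ⟨ha' | ha', hb' | hb'⟩ :
      (a = 2 * k - 1 ∨ a = 2 * k) ∧ (b = 2 * k + 1 ∨ b = 2 * k + 2) := by omega
  all_goals
    subst ha' hb'
    clear hk hlevel
    grind

theorem adj_iff_mem_chordLevels (hk₁ : 1 ≤ k) (hk : k ≤ m) :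
    (valGraph H).Adj (2 * k - 1) (2 * k) ↔ k = m ∨ k ∈ chordLevels H := by
  obtain rfl | hlt := hk.eq_or_lt
  · obtain ⟨k, rfl⟩ := Nat.exists_eq_add_of_le' hk₁
    exact iff_of_true (hH.adj_top rfl) (.inl rfl)
  · rw [mem_chordLevels, Finset.mem_Icc]
    grind

theorem adj_iff_of_lt {a b : ℕ} (hab : a < b) (hb : b < 2 * m + 1) : (valGraph H).Adj a b ↔
    (level a = level b ∧ (level a = m ∨ level a ∈ chordLevels H)) ∨
      (level b = level a + 1 ∧ (a = 0 ∨ (IsBackward H a ↔ IsBackward H b))) := by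
  obtain hlevel | hlevel | hlevel : level b = level a ∨ level b = level a + 1 ∨
      level a + 2 ≤ level b := by
    dsimp only [level]
    omega
  · obtain ⟨k, rfl, rfl⟩ : ∃ k, a = 2 * k - 1 ∧ b = 2 * k :=
      ⟨level b, by dsimp only [level] at hlevel ⊢; omega⟩
    have ha : level (2 * k - 1) = k := by dsimp only [level]; omega
    simp [hlevel, ha, hH.adj_iff_mem_chordLevels (k := k) (by omega) (by omega)]
  · obtain rfl | ha := a.eq_zero_or_pos
    · have hb' : b = 1 ∨ b = 2 := by dsimp only [level] at hlevel; omega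
      simp [hlevel, hH.adj_zero (by omega) hb']
    · simp [hlevel, ha.ne', hH.adj_iff_isBackward_iff ha hb hlevel]
  · refine iff_of_false (fun hadj => ?_) (by omega)
    have := hH.level_le_succ_of_valGraph_adj hadj
    omega

end IsLayered

end Layered

section SymmChordCycle

variable {n m : ℕ}

/-- `H₁(i₁, …, i_k)` indexed by the set `S = {i₁, …, i_k}`, since repetitions and the order of the
indices do not change the graph. -/
def symmChordCycle (n : ℕ) (S : Finset ℕ) : SimpleGraph (Fin n) :=
  cycleGraph n ⊔ fromRel fun a b => a.val ∈ S ∧ a.val + b.val = n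

theorem symmChordCycle_empty (n : ℕ) : symmChordCycle n ∅ = cycleGraph n := by
  ext
  simp [symmChordCycle]

theorem H12_eq_symmChordCycle (n k : ℕ) (i : Fin k → ℕ) :
    H12 n k i = symmChordCycle n (Finset.univ.image i) := by
  ext a b
  simp only [H12, cyclePlusChords, symmChordCycle, sup_adj, fromEdgeSet_adj, fromRel_adj,
    Set.mem_ofPred_eq, Finset.mem_image, Finset.mem_univ, true_and]
  refine or_congr_right ⟨?_, ?_⟩
  · rintro ⟨⟨j, c, d, hc, hd, hab⟩, hne⟩
    refine ⟨hne, ?_⟩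
    obtain ⟨rfl, rfl⟩ | ⟨rfl, rfl⟩ := Sym2.eq_iff.mp hab
    · exact .inl ⟨⟨j, hc.symm⟩, by omega⟩
    · exact .inr ⟨⟨j, hc.symm⟩, by omega⟩
  · rintro ⟨hne, ⟨⟨j, hj⟩, hab⟩ | ⟨⟨j, hj⟩, hab⟩⟩
    · exact ⟨⟨j, a, b, hj.symm, by omega, rfl⟩, hne⟩
    · exact ⟨⟨j, b, a, hj.symm, by omega, Sym2.eq_swap⟩, hne⟩

theorem H12_orderEmbOfFin (n : ℕ) (S : Finset ℕ) :
    H12 n #S (S.orderEmbOfFin rfl) = symmChordCycle n S := by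
  rw [H12_eq_symmChordCycle, Finset.image_orderEmbOfFin_univ]

variable {H : SimpleGraph (Fin (2 * m + 1))}

theorem isBackward_iff_not_isBackward {a b : ℕ} (hab : a < b) (hlevel : level a = level b) :
    IsBackward H a ↔ ¬IsBackward H b := by
  obtain ⟨k, rfl, rfl⟩ : ∃ k, a = 2 * k - 1 ∧ b = 2 * k :=
    ⟨level b, by dsimp only [level] at hlevel ⊢; omega⟩
  rw [isBackward_two_mul_sub_one (by omega), isBackward_two_mul]

theorem level_pos_of_isBackward {a : ℕ} (ha : IsBackward H a) : 0 < level a := by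
  obtain rfl | hpos := a.eq_zero_or_pos
  · exact (isBackward_two_mul (k := 0).mp ha).elim
  · dsimp only [level]
    omega

theorem cyclePosition_lt {a : ℕ} (ha : a < 2 * m + 1) : cyclePosition H a < 2 * m + 1 := by
  unfold cyclePosition
  split_ifs with hback
  · have := level_pos_of_isBackward hback
    omega
  · dsimp only [level]
    omega

theorem cyclePosition_injOn : Set.InjOn (cyclePosition H) (Set.Iio (2 * m + 1)) := by
  intro a ha b hb hab
  wlog hlt : a < b generalizing a b
  · exact (not_lt.mp hlt).eq_or_lt.elim Eq.symm fun h => (this hb ha hab.symm h).symm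
  rw [Set.mem_Iio] at ha hb
  have hopp := isBackward_iff_not_isBackward (H := H) hlt
  unfold cyclePosition at hab
  have hla : level a ≤ m := by dsimp only [level]; omega
  have hlb : level b ≤ m := by dsimp only [level]; omega
  split_ifs at hab <;> grind

theorem symmChordCycle_adj_iff_level {u v : Fin (2 * m + 1)} {a b : ℕ} (hab : a < b)
    (hb : b < 2 * m + 1) (hu : u.val = cyclePosition H a) (hv : v.val = cyclePosition H b) :
    (symmChordCycle (2 * m + 1) (chordLevels H)).Adj u v ↔
      (level a = level b ∧ (level a = m ∨ level a ∈ chordLevels H)) ∨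
        (level b = level a + 1 ∧ (a = 0 ∨ (IsBackward H a ↔ IsBackward H b))) := by
  have hopp := isBackward_iff_not_isBackward (H := H) hab
  have ha₀ := level_pos_of_isBackward (H := H) (a := a)
  have hchord (k : ℕ) (hk : k ∈ chordLevels H) : 1 ≤ k ∧ k ≤ m - 1 :=
    Finset.mem_Icc.mp (mem_chordLevels.mp hk).1
  rw [symmChordCycle, sup_adj, cycleGraph_adj_iff_val (by omega), fromRel_adj, Ne, Fin.ext_iff, hu,
    hv]
  unfold cyclePosition
  have hla : level a ≤ level b ∧ level b ≤ m ∧ (a = 0 ↔ level a = 0) := by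
    dsimp only [level]; omega
  have hlb : 0 < level b := by dsimp only [level]; omega
  generalize level a = k at *
  generalize level b = l at *
  by_cases hA : IsBackward H a <;> by_cases hB : IsBackward H b <;>
    simp only [hA, hB, if_true, if_false] at hopp ha₀ ⊢ <;> grind

theorem IsLayered.nonempty_iso_symmChordCycle (hH : IsLayered H) :
    Nonempty (H ≃g symmChordCycle (2 * m + 1) (chordLevels H)) := by
  let position (a : Fin (2 * m + 1)) : Fin (2 * m + 1) :=
    ⟨cyclePosition H a, cyclePosition_lt a.isLt⟩
  have hinj : Function.Injective position := fun a b hab =>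
    Fin.ext (cyclePosition_injOn a.isLt b.isLt (congrArg Fin.val hab))
  refine ⟨Equiv.ofBijective position (Finite.injective_iff_bijective.mp hinj), fun {a b} => ?_⟩
  rw [Equiv.ofBijective_apply, Equiv.ofBijective_apply]
  wlog hab : a ≤ b generalizing a b
  · rw [adj_comm, H.adj_comm]
    exact this (not_le.mp hab).le
  obtain rfl | hlt := hab.eq_or_lt
  · simp
  · rw [symmChordCycle_adj_iff_level (H := H) hlt b.isLt rfl rfl, ← valGraph_adj_val,
      hH.adj_iff_of_lt hlt b.isLt]

end SymmChordCycle

section SortedFiedler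

variable {V : Type*} [Fintype V] [DecidableEq V] {n m : ℕ} {G : SimpleGraph V}

theorem IsFiedler.exists_iso_monotone {x : V → ℝ} (hx : IsFiedler G x)
    (hcard : Fintype.card V = n + 1) : ∃ (H : SimpleGraph (Fin (n + 1))) (f : ℕ → ℝ),
      Nonempty (G ≃g H) ∧ Monotone f ∧ IsFiedler H fun i => f i := by
  let e := (Fintype.equivFinOfCardEq hcard).symm
  let sorted : Fin (n + 1) ≃ V := (Tuple.sort (x ∘ e)).trans e
  have hmono : Monotone (x ∘ sorted) := Tuple.monotone_sort (x ∘ e)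
  let iso : G.comap sorted ≃g G := Iso.comap sorted G
  refine ⟨G.comap sorted, fun a => x (sorted (Fin.clamp a n)), ⟨iso.symm⟩,
    fun a b hab => hmono ?_, ?_⟩
  · exact Fin.mk_le_mk.mpr (min_le_min_right n hab)
  · have hclamp (i : Fin (n + 1)) : Fin.clamp i n = i := by ext; simp; omega
    simpa only [hclamp] using! hx.comp_iso iso

theorem IsFiedler.comap_rev {H : SimpleGraph (Fin n)} {f : ℕ → ℝ}
    (h : IsFiedler H fun i => f i) :
    IsFiedler (H.comap Fin.revPerm) fun i => -f (n - 1 - i) := by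
  convert (h.comp_iso (Iso.comap Fin.revPerm H)).neg using 3 with i
  exact congrArg (-f ·) (by rw [Iso.comap_apply, Fin.revPerm_apply, Fin.val_rev]; omega)

theorem exists_iso_isLayered (hG : TwoConnected G) (hcard : Fintype.card V = 2 * m + 1)
    (hle : algCon G ≤ algCon (cycleGraph (2 * m + 1))) :
    ∃ H : SimpleGraph (Fin (2 * m + 1)), Nonempty (G ≃g H) ∧ IsLayered H := by
  have : Nontrivial V := ⟨hG.1⟩
  have hm : 0 < m := by have := Fintype.one_lt_card (α := V); omega
  obtain ⟨x, hx⟩ := exists_isFiedler G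
  obtain ⟨H, f, ⟨e⟩, hf, hfiedler⟩ := hx.exists_iso_monotone hcard
  have hlayered {H' : SimpleGraph (Fin (2 * m + 1))} (e' : G ≃g H') {f' : ℕ → ℝ}
      (hf' : Monotone f') (hfiedler' : IsFiedler H' fun i => f' i)
      (hlt : ∀ k < m, f' (2 * k) < f' (2 * k + 1)) : IsLayered H' :=
    isLayered_of_lt_succ (hG.of_iso e') hm hf'
      (lapForm_eq_foldedCycle (hG.of_iso e') (by omega) hf' hfiedler'
        ((algCon_congr e').symm.trans_le hle)).le hlt
  have hfolded := isFiedler_foldedCycle (hG.of_iso e) (by omega) hf hfiedler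
    ((algCon_congr e).symm.trans_le hle)
  obtain heven | hodd := lt_succ_even_or_odd (by omega) hf hfolded
  · exact ⟨H, ⟨e⟩, hlayered e hf hfiedler fun k hk => heven k (by omega)⟩
  · have e' : G ≃g H.comap Fin.revPerm := e.trans (Iso.comap Fin.revPerm H).symm
    refine ⟨_, ⟨e'⟩, hlayered e' (fun a b hab => neg_le_neg (hf (by omega))) hfiedler.comap_rev
      fun k hk => neg_lt_neg ?_⟩
    calc f (2 * m + 1 - 1 - (2 * k + 1)) = f (2 * (m - 1 - k) + 1) := by congr 1; omega
      _ < f (2 * (m - 1 - k) + 2) := hodd (m - 1 - k) (by omega)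
      _ = f (2 * m + 1 - 1 - 2 * k) := by congr 1; omega

theorem exists_iso_symmChordCycle (hG : TwoConnected G) (hcard : Fintype.card V = 2 * m + 1)
    (hle : algCon G ≤ algCon (cycleGraph (2 * m + 1))) :
    ∃ S ⊆ Finset.Icc 1 (m - 1), Nonempty (G ≃g symmChordCycle (2 * m + 1) S) := by
  obtain ⟨H, ⟨e⟩, hH⟩ := exists_iso_isLayered hG hcard hle
  obtain ⟨e'⟩ := hH.nonempty_iso_symmChordCycle
  exact ⟨chordLevels H, fun k hk => (mem_chordLevels.mp hk).1, ⟨e.trans e'⟩⟩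

end SortedFiedler

theorem twoConnected_odd_equality_characterization
    {V : Type*} [Fintype V] [DecidableEq V] {n : ℕ}
    (G : SimpleGraph V) (hcard : Fintype.card V = n) (hodd : Odd n) (hn : 5 ≤ n)
    (hG : TwoConnected G) (heq : algCon G = algCon (SimpleGraph.cycleGraph n)) :
    Nonempty (G ≃g SimpleGraph.cycleGraph n) ∨
      ∃ (k : ℕ) (i : Fin k → ℕ), 1 ≤ k ∧ Monotone i ∧
        (∀ j, 1 ≤ i j ∧ i j ≤ (n - 3) / 2) ∧ Nonempty (G ≃g H12 n k i) := by
  obtain ⟨m, rfl⟩ := hodd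
  obtain ⟨S, hS, e⟩ := exists_iso_symmChordCycle hG hcard heq.le
  obtain rfl | hnonempty := S.eq_empty_or_nonempty
  · exact .inl (symmChordCycle_empty _ ▸ e)
  · refine .inr ⟨#S, S.orderEmbOfFin rfl, hnonempty.card_pos, (S.orderEmbOfFin rfl).monotone,
      fun j => ?_, H12_orderEmbOfFin _ S ▸ e⟩
    rw [show (2 * m + 1 - 3) / 2 = m - 1 by omega]
    exact Finset.mem_Icc.mp (hS (S.orderEmbOfFin_mem rfl j))
end
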